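/- arXiv:math/0610776 — 2 statements merged into one kernel-verified Lean document; each statement's English description precedes it below -/
import Mathlib

section
/- A complete first-order theory T in a countable language is ℵ₀-categorical if and only if for every n, T has only finitely many complete n-types. -/
open FirstOrder FirstOrder.Language Cardinal

universe u v w

namespace FirstOrder.Language

variable {L : Language.{u, v}}

namespace Formula

theorem realize_congr_of_eqOn_freeVarFinset {α : Type*} [DecidableEq α] {M : Type*}
    [L.Structure M] (φ : L.Formula α) {x y : α → M}
    (h : ∀ a ∈ BoundedFormula.freeVarFinset φ, x a = y a) : φ.Realize x ↔ φ.Realize y := by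
  unfold Formula.Realize
  rw [← BoundedFormula.realize_restrictFreeVar' (φ := φ) subset_rfl (v := y),
    BoundedFormula.realize_restrictFreeVar x]
  exact fun a => (h _ a.2).symm

theorem realize_iExs_relabel_snoc {n : ℕ} {M : Type*} [L.Structure M]
    (φ : L.Formula (Fin (n + 1))) (x : Fin n → M) :
    ((φ.relabel (Fin.snoc Sum.inl (Sum.inr 0) : Fin (n + 1) → Fin n ⊕ Fin 1)).iExs
      (Fin 1)).Realize x ↔ ∃ a, φ.Realize (Fin.snoc x a : Fin (n + 1) → M) := by
  simp only [Formula.realize_iExs, Formula.realize_relabel, Fin.comp_snoc, Sum.elim_comp_inl,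
    Sum.elim_inr]
  exact ⟨fun ⟨i, hi⟩ => ⟨i 0, hi⟩, fun ⟨a, ha⟩ => ⟨fun _ => a, ha⟩⟩

end Formula

namespace Theory

variable {T : L.Theory} {α : Type w}

theorem CompleteType.exists_typeOf_eq (p : T.CompleteType α) :
    ∃ (M : ModelType.{u, v, max u v w} T) (x : α → M), T.typeOf x = p :=
  exists_modelType_is_realized_in T p

theorem CompleteType.ext_formula {p q : T.CompleteType α}
    (h : ∀ φ : L.Formula α, Formula.equivSentence φ ∈ p → Formula.equivSentence φ ∈ q) :
    p = q := by
  have h' : ∀ ψ, ψ ∈ p → ψ ∈ q := fun ψ hψ => by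
    simpa using h (Formula.equivSentence.symm ψ) (by simpa using hψ)
  refine SetLike.ext fun ψ => ⟨h' ψ, fun hq => ?_⟩
  by_contra hp
  exact (q.not_mem_iff ψ).1 (h' _ ((p.not_mem_iff ψ).2 hp)) hq

section typeOf

variable {M : Type*} [L.Structure M] [Nonempty M] [M ⊨ T]
  {N : Type*} [L.Structure N] [Nonempty N] [N ⊨ T]

theorem typeOf_eq_typeOf_iff {x : α → M} {y : α → N} :
    T.typeOf x = T.typeOf y ↔ ∀ φ : L.Formula α, φ.Realize x ↔ φ.Realize y := by
  refine ⟨fun h φ => ?_, fun h => CompleteType.ext_formula fun φ => ?_⟩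
  · rw [← CompleteType.formula_mem_typeOf (T := T), h, CompleteType.formula_mem_typeOf]
  · rw [CompleteType.formula_mem_typeOf, CompleteType.formula_mem_typeOf, h]
    exact id

theorem typeOf_comp_elementaryEmbedding (f : M ↪ₑ[L] N) (x : α → M) :
    T.typeOf (f ∘ x) = T.typeOf x :=
  typeOf_eq_typeOf_iff.2 fun φ => f.map_formula φ x

end typeOf

theorem CompleteType.exists_formula_mem_of_isOpen {s : Set (T.CompleteType α)} (hs : IsOpen s)
    {p : T.CompleteType α} (hp : p ∈ s) :
    ∃ φ : L.Formula α, Formula.equivSentence φ ∈ p ∧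
      ∀ q : T.CompleteType α, Formula.equivSentence φ ∈ q → q ∈ s := by
  obtain ⟨_, ⟨ψ, rfl⟩, hψ, hsub⟩ :=
    _root_.CompleteType.isTopologicalBasis_range_typesWith.exists_subset_of_mem_open hp hs
  exact ⟨Formula.equivSentence.symm ψ, by simpa using hψ, fun q hq => hsub (by simpa using hq)⟩

theorem CompleteType.isOpen_formula_mem (φ : L.Formula α) :
    IsOpen {p : T.CompleteType α | Formula.equivSentence φ ∈ p} :=
  _root_.CompleteType.isOpen_typesWith _

theorem CompleteType.dense_of_forall_formula {s : Set (T.CompleteType α)}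
    (h : ∀ (φ : L.Formula α) (M : ModelType.{u, v, max u v w} T) (x : α → M), φ.Realize x →
      ∃ (N : ModelType.{u, v, max u v w} T) (y : α → N), φ.Realize y ∧ T.typeOf y ∈ s) :
    Dense s := by
  refine dense_iff_inter_open.2 fun U hU ⟨p, hp⟩ => ?_
  obtain ⟨φ, hφ, hφU⟩ := exists_formula_mem_of_isOpen hU hp
  obtain ⟨M, x, rfl⟩ := p.exists_typeOf_eq
  obtain ⟨N, y, hy, hys⟩ := h φ M x (formula_mem_typeOf.1 hφ)
  exact ⟨_, hφU _ (formula_mem_typeOf.2 hy), hys⟩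

/-- The types satisfying the Henkin condition for `θ`: if some element witnesses `θ`, then one
of the variables does. -/
def henkinTypes (T : L.Theory) (θ : L.Formula (ℕ ⊕ Fin 1)) : Set (T.CompleteType ℕ) :=
  {p | Formula.equivSentence (θ.iExs (Fin 1)).not ∈ p} ∪
    ⋃ k : ℕ, {p | Formula.equivSentence (θ.relabel (Sum.elim id fun _ => k)) ∈ p}

theorem isOpen_henkinTypes (θ : L.Formula (ℕ ⊕ Fin 1)) : IsOpen (T.henkinTypes θ) :=
  (CompleteType.isOpen_formula_mem _).union
    (isOpen_iUnion fun _ => CompleteType.isOpen_formula_mem _)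

theorem typeOf_mem_henkinTypes_iff {M : Type*} [L.Structure M] [Nonempty M] [M ⊨ T]
    {θ : L.Formula (ℕ ⊕ Fin 1)} {x : ℕ → M} :
    T.typeOf x ∈ T.henkinTypes θ ↔
      ((∃ a, θ.Realize (Sum.elim x a)) → ∃ k, θ.Realize (Sum.elim x fun _ => x k)) := by
  simp only [henkinTypes, Set.mem_union, Set.mem_iUnion, Set.mem_ofPred_eq,
    CompleteType.formula_mem_typeOf, Formula.realize_not, Formula.realize_iExs,
    Formula.realize_relabel, Sum.comp_elim, Function.comp_id, imp_iff_not_or]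
  rfl

theorem dense_henkinTypes (θ : L.Formula (ℕ ⊕ Fin 1)) : Dense (T.henkinTypes θ) := by
  classical
  refine CompleteType.dense_of_forall_formula fun φ M x hφ => ?_
  by_cases hθ : ∃ a, θ.Realize (Sum.elim x a)
  · obtain ⟨a, ha⟩ := hθ
    obtain ⟨k, hk⟩ := Infinite.exists_notMem_finset
      (BoundedFormula.freeVarFinset φ ∪ (BoundedFormula.freeVarFinset θ).image
        (Sum.elim id fun _ => 0))
    simp only [Finset.mem_union, Finset.mem_image, not_or, not_exists, not_and] at hk
    refine ⟨M, Function.update x k (a 0), ?_, typeOf_mem_henkinTypes_iff.2 fun _ => ⟨k, ?_⟩⟩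
    · refine (φ.realize_congr_of_eqOn_freeVarFinset fun i hi => ?_).1 hφ
      rw [Function.update_of_ne (by rintro rfl; exact hk.1 hi)]
    · refine (θ.realize_congr_of_eqOn_freeVarFinset ?_).1 ha
      rintro (i | i) hi
      · simp [Function.update_of_ne (show i ≠ k from fun h => hk.2 _ hi h)]
      · simp [Subsingleton.elim i 0]
  · exact ⟨M, x, hφ, typeOf_mem_henkinTypes_iff.2 fun h => absurd h hθ⟩

theorem meetsDefinable_range {M : Type*} [L.Structure M] [Nonempty M] [M ⊨ T] {x : ℕ → M}
    (hx : ∀ θ, T.typeOf x ∈ T.henkinTypes θ) : L.MeetsDefinable (Set.range x) := by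
  rintro D ⟨a, ha⟩ hD
  obtain ⟨φ, hφ⟩ := Set.definable_iff_exists_formula_sum.1 hD
  choose g hg using fun b : Set.range x => b.2
  have key : ∀ b : M, b ∈ D ↔
      (φ.relabel (Sum.map g id)).Realize (Sum.elim x fun _ : Fin 1 => b) := fun b => by
    have : b ∈ D ↔ (fun _ => b) ∈ {v : Fin 1 → M | v 0 ∈ D} := Iff.rfl
    rw [this, hφ, Formula.realize_relabel, Sum.elim_comp_map, Function.comp_id]
    simp only [Set.mem_ofPred_eq, Function.comp_def, hg]
  obtain ⟨k, hk⟩ := typeOf_mem_henkinTypes_iff.1 (hx (φ.relabel (Sum.map g id)))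
    ⟨fun _ => a, (key a).1 ha⟩
  exact ⟨x k, (key _).2 hk, k, rfl⟩

/-- The types in which the subtuple picked out by `f` does not have type `q`. -/
def omittingTypes {n : ℕ} (q : T.CompleteType (Fin n)) (f : Fin n → ℕ) :
    Set (T.CompleteType ℕ) :=
  ⋃ θ : {θ : L.Formula (Fin n) // Formula.equivSentence θ ∈ q},
    {p | Formula.equivSentence (θ.1.not.relabel f) ∈ p}

theorem isOpen_omittingTypes {n : ℕ} (q : T.CompleteType (Fin n)) (f : Fin n → ℕ) :
    IsOpen (omittingTypes q f) :=
  isOpen_iUnion fun _ => CompleteType.isOpen_formula_mem _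

theorem typeOf_mem_omittingTypes_iff {M : Type*} [L.Structure M] [Nonempty M] [M ⊨ T] {n : ℕ}
    {q : T.CompleteType (Fin n)} {f : Fin n → ℕ} {x : ℕ → M} :
    T.typeOf x ∈ omittingTypes q f ↔ T.typeOf (x ∘ f) ≠ q := by
  rw [← not_iff_not, not_not]
  simp only [omittingTypes, Set.mem_iUnion, Set.mem_ofPred_eq, CompleteType.formula_mem_typeOf,
    Formula.realize_relabel, Formula.realize_not, not_exists, not_not, Subtype.forall]
  refine ⟨fun h => (CompleteType.ext_formula fun φ hφ => ?_).symm, ?_⟩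
  · exact CompleteType.formula_mem_typeOf.2 (h φ hφ)
  · rintro rfl φ hφ
    exact CompleteType.formula_mem_typeOf.1 hφ

theorem dense_omittingTypes {n : ℕ} {q : T.CompleteType (Fin n)} (hq : ¬ IsOpen {q})
    (f : Fin n → ℕ) : Dense (omittingTypes q f) := by
  classical
  refine CompleteType.dense_of_forall_formula fun φ M x hφ => ?_
  simp_rw [typeOf_mem_omittingTypes_iff]
  by_cases hx : T.typeOf (x ∘ f) = q
  swap
  · exact ⟨M, x, hφ, hx⟩
  let γ : Set ℕ := ↑(BoundedFormula.freeVarFinset φ) ∪ Set.range f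
  have : Finite γ := ((Finset.finite_toSet _).union (Set.finite_range f)).to_subtype
  let ψ : L.Formula γ := BoundedFormula.restrictFreeVar φ (Set.inclusion Set.subset_union_left)
  have hψ {N : Type (max u v)} [L.Structure N] (y : ℕ → N) :
      ψ.Realize (fun i => y i) ↔ φ.Realize y :=
    BoundedFormula.realize_restrictFreeVar' (φ := φ) (s := γ) Set.subset_union_left
  let χ : L.Formula (Fin n) := (ψ.relabel Sum.inr ⊓ Formula.iInf fun i : Fin n =>
    (Term.var (Sum.inl i)).equal (Term.var (Sum.inr ⟨f i, Or.inr ⟨i, rfl⟩⟩)) :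
      L.Formula (Fin n ⊕ γ)).iExs γ
  have hχ {N : Type (max u v)} [L.Structure N] (z : Fin n → N) : χ.Realize z ↔
      ∃ y : γ → N, ψ.Realize y ∧ ∀ i, z i = y ⟨f i, Or.inr ⟨i, rfl⟩⟩ := by
    simp [χ, Formula.realize_iExs, Formula.realize_inf, Formula.realize_iInf,
      Formula.realize_relabel]
  have hχq : Formula.equivSentence χ ∈ q := by
    rw [← hx, CompleteType.formula_mem_typeOf, hχ]
    exact ⟨fun i => x i, (hψ x).2 hφ, fun _ => rfl⟩
  obtain ⟨q', hq', hne⟩ : ∃ q', Formula.equivSentence χ ∈ q' ∧ q' ≠ q := by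
    by_contra! h
    refine hq ?_
    convert! CompleteType.isOpen_formula_mem (T := T) χ using 1
    exact Set.Subset.antisymm (Set.singleton_subset_iff.2 hχq) h
  obtain ⟨N, z, rfl⟩ := q'.exists_typeOf_eq
  obtain ⟨y, hy, hyz⟩ := (hχ z).1 (CompleteType.formula_mem_typeOf.1 hq')
  let y' : ℕ → N := fun i => if h : i ∈ γ then y ⟨i, h⟩ else Classical.arbitrary N
  have hy' : (fun i : γ => y' i) = y := funext fun i => by simp [y']
  refine ⟨N, y', (hψ y').1 (hy' ▸ hy), ?_⟩
  convert! hne using 2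
  funext i
  rw [hyz, ← hy']
  rfl

/-- The **omitting types theorem**, for complete types: a satisfiable theory in a countable
language has a countable model omitting any given non-isolated type. -/
theorem exists_countable_modelType_not_mem_realizedTypes [Countable L.Symbols]
    (hT : T.IsSatisfiable) {n : ℕ} {q : T.CompleteType (Fin n)} (hq : ¬ IsOpen {q}) :
    ∃ M : ModelType.{u, v, max u v} T, Countable M ∧ q ∉ T.realizedTypes M (Fin n) := by
  have : Nonempty (T.CompleteType ℕ) := CompleteType.nonempty_iff.2 hT
  have hH : ∀ᶠ p in residual (T.CompleteType ℕ), ∀ θ, p ∈ T.henkinTypes θ :=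
    eventually_countable_forall.2 fun θ =>
      residual_of_dense_open (isOpen_henkinTypes θ) (dense_henkinTypes θ)
  have hO : ∀ᶠ p in residual (T.CompleteType ℕ), ∀ f, p ∈ omittingTypes q f :=
    eventually_countable_forall.2 fun f =>
      residual_of_dense_open (isOpen_omittingTypes q f) (dense_omittingTypes hq f)
  obtain ⟨p, hpH, hpO⟩ := (dense_of_mem_residual (hH.and hO)).nonempty
  obtain ⟨M, x, rfl⟩ := p.exists_typeOf_eq
  have hx := meetsDefinable_range hpH
  let S := hx.toElementarySubstructure
  have hS : (S : Set M) = Set.range x := hx.closure_eq_self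
  refine ⟨S.toModel T, ?_, ?_⟩
  · exact (hS ▸ Set.countable_range x : (S : Set M).Countable).to_subtype
  · rintro ⟨z : Fin n → S, rfl⟩
    choose f hf using fun i => (hS ▸ (z i).2 : (z i : M) ∈ Set.range x)
    refine typeOf_mem_omittingTypes_iff.1 (hpO f) ?_
    rw [show x ∘ f = S.subtype ∘ z from funext hf]
    exact typeOf_comp_elementaryEmbedding S.subtype z

theorem exists_card_eq_aleph0_mem_realizedTypes [Countable L.Symbols]
    (hInf : ∀ M : ModelType.{u, v, max u v} T, Infinite M) {n : ℕ}
    (q : T.CompleteType (Fin n)) :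
    ∃ M : ModelType.{u, v, max u v} T, #M = ℵ₀ ∧ q ∈ T.realizedTypes M (Fin n) := by
  obtain ⟨M, x, rfl⟩ := q.exists_typeOf_eq
  have := hInf M
  have hL : L.card ≤ ℵ₀ := Cardinal.mk_le_aleph0_iff.2 ‹_›
  obtain ⟨S, hxS, hS⟩ := exists_elementarySubstructure_card_eq L (Set.range x) ℵ₀ le_rfl
    (by simp) (by simpa using hL) (by simp)
  refine ⟨S.toModel T, Cardinal.lift_injective (by exact hS), ?_⟩
  exact ⟨fun i => ⟨x i, hxS ⟨i, rfl⟩⟩,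
    (typeOf_comp_elementaryEmbedding (T := T) S.subtype _).symm⟩

theorem finite_completeType_of_categorical [Countable L.Symbols] (hT : T.IsSatisfiable)
    (hInf : ∀ M : ModelType.{u, v, max u v} T, Infinite M)
    (hcat : (ℵ₀ : Cardinal.{max u v}).Categorical T) (n : ℕ) :
    Finite (T.CompleteType (Fin n)) := by
  suffices DiscreteTopology (T.CompleteType (Fin n)) from finite_of_compact_of_discrete
  refine discreteTopology_iff_isOpen_singleton.2 fun q => ?_
  by_contra hq
  obtain ⟨M, hM, hqM⟩ := exists_countable_modelType_not_mem_realizedTypes hT hq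
  obtain ⟨N, hN, x, rfl⟩ := exists_card_eq_aleph0_mem_realizedTypes hInf q
  have := hInf M
  obtain ⟨e⟩ := hcat N M hN (Cardinal.mk_eq_aleph0 M)
  exact hqM ⟨e ∘ x, typeOf_comp_elementaryEmbedding e.toElementaryEmbedding x⟩

end Theory

section BackAndForth

variable {M N : Type*} [L.Structure M] [L.Structure N]

variable (L) in
/-- A finite set of pairs is a partial elementary map if tuples of its first coordinates satisfy
the same formulas as the corresponding tuples of second coordinates. -/
def IsPartialElementary (s : Finset (M × N)) : Prop :=
  ∀ ⦃n : ℕ⦄ (φ : L.Formula (Fin n)) (x : Fin n → M × N), (∀ i, x i ∈ s) →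
    (φ.Realize (fun i => (x i).1) ↔ φ.Realize fun i => (x i).2)

theorem IsPartialElementary.map_swap {s : Finset (M × N)} (hs : L.IsPartialElementary s) :
    L.IsPartialElementary (s.map (Equiv.prodComm M N).toEmbedding) := by
  intro n φ x hx
  refine (hs φ (fun i => (x i).swap) fun i => ?_).symm
  obtain ⟨a, ha, hax⟩ := Finset.mem_map.1 (hx i)
  rw [← hax]
  exact ha

/-- A back-and-forth argument. -/
theorem nonempty_equiv_of_isPartialElementary [Countable M] [Countable N]
    (h : L.IsPartialElementary (∅ : Finset (M × N)))
    (forth : ∀ s : Finset (M × N), L.IsPartialElementary s →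
      ∀ a, ∃ t, s ⊆ t ∧ L.IsPartialElementary t ∧ ∃ b, (a, b) ∈ t)
    (back : ∀ s : Finset (M × N), L.IsPartialElementary s →
      ∀ b, ∃ t, s ⊆ t ∧ L.IsPartialElementary t ∧ ∃ a, (a, b) ∈ t) :
    Nonempty (M ≃[L] N) := by
  let P := {s : Finset (M × N) // L.IsPartialElementary s}
  have := Encodable.ofCountable (M ⊕ N)
  let D : M ⊕ N → Order.Cofinal P := Sum.elim
    (fun a => ⟨{s | ∃ b, (a, b) ∈ s.1}, fun s =>
      have ⟨t, hst, ht, hb⟩ := forth s.1 s.2 a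
      ⟨⟨t, ht⟩, hb, hst⟩⟩)
    (fun b => ⟨{s | ∃ a, (a, b) ∈ s.1}, fun s =>
      have ⟨t, hst, ht, hb⟩ := back s.1 s.2 b
      ⟨⟨t, ht⟩, hb, hst⟩⟩)
  let I := Order.idealOfCofinals (⟨∅, h⟩ : P) D
  have hI : ∀ {n : ℕ} (φ : L.Formula (Fin n)) (x : Fin n → M) (y : Fin n → N),
      (∀ i, ∃ s ∈ I, (x i, y i) ∈ s.1) → (φ.Realize x ↔ φ.Realize y) := by
    intro n φ x y hxy
    choose s hs hxs using hxy
    obtain ⟨t, ht, hst⟩ : ∃ t ∈ I, ∀ i, s i ≤ t := by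
      have : Nonempty I := I.nonempty.to_subtype
      obtain ⟨t, ht⟩ := (directedOn_iff_directed.1 I.directed).finite_le
        fun i => (⟨s i, hs i⟩ : I)
      exact ⟨t, t.2, ht⟩
    exact t.2 φ (fun i => (x i, y i)) fun i => hst i (hxs i)
  have hinj : ∀ a a' b b', (∃ s ∈ I, (a, b) ∈ s.1) → (∃ s ∈ I, (a', b') ∈ s.1) →
      (a = a' ↔ b = b') := by
    intro a a' b b' hb hb'
    have := hI (n := 2) ((Term.var 0).equal (Term.var 1)) ![a, a'] ![b, b']
      (Fin.forall_fin_two.2 ⟨hb, hb'⟩)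
    simpa using this
  have hdom : ∀ a, ∃ b, ∃ s ∈ I, (a, b) ∈ s.1 := fun a =>
    have ⟨s, ⟨b, hb⟩, hs⟩ := Order.cofinal_meets_idealOfCofinals (⟨∅, h⟩ : P) D (Sum.inl a)
    ⟨b, s, hs, hb⟩
  have hcod : ∀ b, ∃ a, ∃ s ∈ I, (a, b) ∈ s.1 := fun b =>
    have ⟨s, ⟨a, ha⟩, hs⟩ := Order.cofinal_meets_idealOfCofinals (⟨∅, h⟩ : P) D (Sum.inr b)
    ⟨a, s, hs, ha⟩
  choose f hf using hdom
  choose g hg using hcod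
  let F : M ↪ₑ[L] N := ⟨f, fun n φ x => (hI φ x (f ∘ x) fun i => hf (x i)).symm⟩
  exact ⟨{
    toFun := f
    invFun := g
    left_inv := fun a => (hinj _ _ _ _ (hg (f a)) (hf a)).2 rfl
    right_inv := fun b => (hinj _ _ _ _ (hf (g b)) (hg b)).1 rfl
    map_fun' := F.map_fun
    map_rel' := F.map_rel }⟩

end BackAndForth

namespace Theory

variable {T : L.Theory}

theorem exists_typeOf_snoc_eq {n : ℕ} [Finite (T.CompleteType (Fin (n + 1)))]
    {M N : Type*} [L.Structure M] [Nonempty M] [M ⊨ T] [L.Structure N] [Nonempty N] [N ⊨ T]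
    {x : Fin n → M} {y : Fin n → N} (h : T.typeOf x = T.typeOf y) (a : M) :
    ∃ b : N, T.typeOf (Fin.snoc x a : Fin (n + 1) → M) = T.typeOf (Fin.snoc y b : _ → N) := by
  obtain ⟨φ, hφ, hφ'⟩ := CompleteType.exists_formula_mem_of_isOpen
    (isOpen_discrete {T.typeOf (Fin.snoc x a : Fin (n + 1) → M)}) rfl
  let ψ : L.Formula (Fin n) := (φ.relabel (Fin.snoc Sum.inl (Sum.inr 0))).iExs (Fin 1)
  have hψ : Formula.equivSentence ψ ∈ T.typeOf x := by
    rw [CompleteType.formula_mem_typeOf, Formula.realize_iExs_relabel_snoc]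
    exact ⟨a, CompleteType.formula_mem_typeOf.1 hφ⟩
  rw [h, CompleteType.formula_mem_typeOf, Formula.realize_iExs_relabel_snoc] at hψ
  obtain ⟨b, hb⟩ := hψ
  exact ⟨b, (hφ' _ (CompleteType.formula_mem_typeOf.2 hb)).symm⟩

theorem isPartialElementary_extend [∀ n, Finite (T.CompleteType (Fin n))]
    {M N : Type*} [L.Structure M] [Nonempty M] [M ⊨ T] [L.Structure N] [Nonempty N] [N ⊨ T]
    {s : Finset (M × N)} (hs : L.IsPartialElementary s) (a : M) :
    ∃ t, s ⊆ t ∧ L.IsPartialElementary t ∧ ∃ b, (a, b) ∈ t := by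
  classical
  let e := s.equivFin.symm
  have he : T.typeOf (fun i => (e i).1.1) = T.typeOf (fun i => (e i).1.2) :=
    typeOf_eq_typeOf_iff.2 fun φ => hs φ (fun i => (e i).1) fun i => (e i).2
  obtain ⟨b, hb⟩ := exists_typeOf_snoc_eq he a
  refine ⟨insert (a, b) s, Finset.subset_insert _ _, fun n φ x hx => ?_, b,
    Finset.mem_insert_self _ _⟩
  have hg : ∀ i, ∃ j, (Fin.snoc (fun i => (e i).1) (a, b) : Fin (s.card + 1) → M × N) j = x i :=
    fun i => by
    obtain h | h := Finset.mem_insert.1 (hx i)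
    · exact ⟨Fin.last _, by simp [h]⟩
    · exact ⟨(e.symm ⟨x i, h⟩).castSucc, by simp⟩
  choose g hg using hg
  have := typeOf_eq_typeOf_iff.1 hb (φ.relabel g)
  rw [Formula.realize_relabel, Formula.realize_relabel] at this
  convert! this using 2
  · funext i
    rw [← hg, ← Function.comp_apply (f := Prod.fst), Fin.comp_snoc]
    rfl
  · funext i
    rw [← hg, ← Function.comp_apply (f := Prod.snd), Fin.comp_snoc]
    rfl

theorem categorical_of_finite_completeType (hT : T.IsComplete)
    [∀ n, Finite (T.CompleteType (Fin n))] : (ℵ₀ : Cardinal.{w}).Categorical T := by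
  intro M N hM hN
  have : Countable M := Cardinal.mk_le_aleph0_iff.1 hM.le
  have : Countable N := Cardinal.mk_le_aleph0_iff.1 hN.le
  refine nonempty_equiv_of_isPartialElementary ?_
    (fun s hs => isPartialElementary_extend (T := T) hs) fun s hs b => ?_
  · intro n φ x hx
    let σ : L.Sentence := φ.relabel fun i => absurd (hx i) (Finset.notMem_empty _)
    have hσ {K : Type w} [L.Structure K] (y : Fin n → K) : K ⊨ σ ↔ φ.Realize y := by
      rw [Sentence.Realize, Formula.realize_relabel]
      exact iff_of_eq <| congrArg _ <| funext fun i => absurd (hx i) (Finset.notMem_empty _)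
    rw [← hσ, ← hσ, hT.realize_sentence_iff, hT.realize_sentence_iff]
  · obtain ⟨t, hst, ht, a, ha⟩ := isPartialElementary_extend (T := T) hs.map_swap b
    refine ⟨_, fun p hp => ?_, ht.map_swap, a, Finset.mem_map.2 ⟨_, ha, rfl⟩⟩
    exact Finset.mem_map.2 ⟨p.swap, hst (Finset.mem_map.2 ⟨p, hp, rfl⟩), rfl⟩

end Theory
end FirstOrder.Language

/-- **Ryll-Nardzewski theorem**: a complete consistent theory `T` in a countable language,
all of whose models are infinite, is `ℵ₀`-categorical iff for every `n` it has only
finitely many complete `n`-types. -/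
theorem ryll_nardzewski {L : Language} [Countable L.Symbols]
    (T : L.Theory) (hT : T.IsMaximal)
    (hInf : ∀ M : Theory.ModelType.{0, 0, 0} T, Infinite M) :
    (Cardinal.aleph0.{0}).Categorical T ↔
      ∀ n : ℕ, Finite (T.CompleteType (Fin n)) := by
  exact ⟨fun h n => Theory.finite_completeType_of_categorical hT.1 hInf h n,
    fun _ => Theory.categorical_of_finite_completeType hT.isComplete⟩
end

section
/- A complete first-order theory T in a countable language is ℵ₀-categorical if and only if for every n, every complete n-type of T is a principal (isolated) type. -/
open FirstOrder FirstOrder.Language Cardinal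

/-- A complete type `p` over `T` in `n` variables is principal (isolated) if some formula `φ`
consistent with `T` implies (modulo `T`) every formula in `p`. -/
def FirstOrder.Language.Theory.CompleteType.IsPrincipal {L : Language} {T : L.Theory} {n : ℕ}
    (p : T.CompleteType (Fin n)) : Prop :=
  ∃ φ : L.Formula (Fin n),
    (∃ (M : Theory.ModelType.{0, 0, 0} T) (v : Fin n → M), φ.Realize v) ∧
    ∀ ψ : L.Formula (Fin n), Formula.equivSentence ψ ∈ p →
      ∀ (M : Theory.ModelType.{0, 0, 0} T) (v : Fin n → M), φ.Realize v → ψ.Realize v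

namespace FirstOrder.Language

section BackAndForth

variable {L : Language} {M N : Type*} [L.Structure M] [L.Structure N]

variable (L) in
/-- A relation between two structures is elementary if related tuples satisfy the same formulas. -/
def IsElementaryRel (R : Set (M × N)) : Prop :=
  ∀ (n : ℕ) (c : Fin n → M × N), (∀ i, c i ∈ R) → ∀ ψ : L.Formula (Fin n),
    ψ.Realize (fun i => (c i).1) ↔ ψ.Realize (fun i => (c i).2)

theorem IsElementaryRel.eq_iff_eq {R : Set (M × N)} (h : L.IsElementaryRel R) {p q : M × N}
    (hp : p ∈ R) (hq : q ∈ R) : p.1 = q.1 ↔ p.2 = q.2 := by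
  simpa using h 2 ![p, q] (by simp [Fin.forall_fin_two, hp, hq])
    ((Term.var 0 : L.Term (Fin 2)).equal (Term.var 1))

/-- A total and surjective elementary relation is the graph of an isomorphism. -/
theorem IsElementaryRel.nonempty_equiv {R : Set (M × N)} (h : L.IsElementaryRel R)
    (hl : ∀ m, ∃ n, (m, n) ∈ R) (hr : ∀ n, ∃ m, (m, n) ∈ R) : Nonempty (M ≃[L] N) := by
  choose f hf using hl
  choose g hg using hr
  refine ⟨⟨⟨f, g, fun m => (h.eq_iff_eq (hg (f m)) (hf m)).2 rfl,
    fun n => (h.eq_iff_eq (hf (g n)) (hg n)).1 rfl⟩, fun {n} F x => ?_, fun {n} r x => ?_⟩⟩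
  · have key := h (n + 1)
      (Fin.cons (Structure.funMap F x, f (Structure.funMap F x)) fun i => (x i, f (x i)))
      (Fin.cases (hf _) fun i => hf _) (Formula.graph F)
    have e₁ : (fun i => (Fin.cons (α := fun _ => M × N)
        (Structure.funMap F x, f (Structure.funMap F x)) (fun i => (x i, f (x i))) i).1) =
        (Fin.cons (Structure.funMap F x) x : Fin (n + 1) → M) := by
      funext i; cases i using Fin.cases <;> rfl
    have e₂ : (fun i => (Fin.cons (α := fun _ => M × N)
        (Structure.funMap F x, f (Structure.funMap F x)) (fun i => (x i, f (x i))) i).2) =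
        (Fin.cons (f (Structure.funMap F x)) (f ∘ x) : Fin (n + 1) → N) := by
      funext i; cases i using Fin.cases <;> rfl
    rw [e₁, e₂, Formula.realize_graph, Formula.realize_graph] at key
    exact (key.1 rfl).symm
  · have key := h n (fun i => (x i, f (x i))) (fun i => hf _) (r.formula Term.var)
    simp only [Formula.realize_rel, Term.realize_var] at key
    exact key.symm

theorem IsElementaryRel.swap {R : Set (M × N)} (h : L.IsElementaryRel R) :
    L.IsElementaryRel (Prod.swap ⁻¹' R) :=
  fun n c hc ψ => (h n (fun i => (c i).swap) hc ψ).symm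

/-- Tuples satisfying the same formulas have elementary pointwise graph. -/
theorem isElementaryRel_range {n : ℕ} {a : Fin n → M} {b : Fin n → N}
    (h : ∀ ψ : L.Formula (Fin n), ψ.Realize a ↔ ψ.Realize b) :
    L.IsElementaryRel (Set.range fun i => (a i, b i)) := by
  intro k c hc ψ
  choose σ hσ using hc
  have := h (ψ.relabel σ)
  simp only [Formula.realize_relabel] at this
  simpa [← hσ, Function.comp_def] using this

theorem ElementarilyEquivalent.isElementaryRel_empty (h : M ≅[L] N) :
    L.IsElementaryRel (∅ : Set (M × N)) := by
  rintro (_ | n) c hc ψ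
  · have key := h.realize_sentence (ψ.relabel (Fin.elim0 : Fin 0 → Empty))
    simp only [Sentence.Realize, Formula.realize_relabel] at key
    convert key using 2
  · exact (hc 0).elim

/-- **Back-and-forth**: countable structures are isomorphic as soon as the empty relation is
elementary and finite elementary relations can be extended on both sides. -/
theorem nonempty_equiv_of_backAndForth [Countable M] [Countable N]
    (h₀ : L.IsElementaryRel (∅ : Set (M × N)))
    (hl : ∀ F : Set (M × N), F.Finite → L.IsElementaryRel F → ∀ m, ∃ n,
      L.IsElementaryRel (insert (m, n) F))
    (hr : ∀ F : Set (M × N), F.Finite → L.IsElementaryRel F → ∀ n, ∃ m,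
      L.IsElementaryRel (insert (m, n) F)) : Nonempty (M ≃[L] N) := by
  let P := {F : Set (M × N) // F.Finite ∧ L.IsElementaryRel F}
  let D : M ⊕ N → Order.Cofinal P := Sum.elim
    (fun m => ⟨{F | ∃ n, (m, n) ∈ F.1}, fun F =>
      let ⟨n, hn⟩ := hl F.1 F.2.1 F.2.2 m
      ⟨⟨insert (m, n) F.1, F.2.1.insert _, hn⟩, ⟨n, Set.mem_insert _ _⟩,
        Set.subset_insert _ _⟩⟩)
    (fun n => ⟨{F | ∃ m, (m, n) ∈ F.1}, fun F =>
      let ⟨m, hm⟩ := hr F.1 F.2.1 F.2.2 n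
      ⟨⟨insert (m, n) F.1, F.2.1.insert _, hm⟩, ⟨m, Set.mem_insert _ _⟩,
        Set.subset_insert _ _⟩⟩)
  let _ := Encodable.ofCountable (M ⊕ N)
  let S : ℕ → P := Order.sequenceOfCofinals ⟨∅, Set.finite_empty, h₀⟩ D
  have hS : Monotone S := Order.sequenceOfCofinals.monotone _ _
  refine IsElementaryRel.nonempty_equiv (R := ⋃ k, (S k).1) (fun n c hc ψ => ?_)
    (fun m => ?_) fun n => ?_
  · simp only [Set.mem_iUnion] at hc
    choose k hk using hc
    obtain ⟨K, hK⟩ := Finite.exists_le k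
    exact (S K).2.2 n c (fun i => hS (hK i) (hk i)) ψ
  · obtain ⟨n, hn⟩ := Order.sequenceOfCofinals.encode_mem
      (⟨∅, Set.finite_empty, h₀⟩ : P) D (Sum.inl m)
    exact ⟨n, Set.mem_iUnion.2 ⟨_, hn⟩⟩
  · obtain ⟨m, hm⟩ := Order.sequenceOfCofinals.encode_mem
      (⟨∅, Set.finite_empty, h₀⟩ : P) D (Sum.inr n)
    exact ⟨m, Set.mem_iUnion.2 ⟨_, hm⟩⟩

end BackAndForth

namespace Theory

variable {L : Language.{0, 0}} {T : L.Theory}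

theorem CompleteType.IsPrincipal.exists_isolating {M : ModelType.{0, 0, 0} T} {n : ℕ}
    {v : Fin n → M} (h : (T.typeOf v).IsPrincipal) :
    ∃ φ : L.Formula (Fin n), φ.Realize v ∧ ∀ ψ : L.Formula (Fin n), ψ.Realize v →
      ∀ (N : ModelType.{0, 0, 0} T) (w : Fin n → N), φ.Realize w → ψ.Realize w := by
  obtain ⟨φ, ⟨N, w, hw⟩, hφ⟩ := h
  refine ⟨φ, ?_, fun ψ hψ => hφ ψ (formula_mem_typeOf.2 hψ)⟩
  by_contra hv
  exact Formula.realize_not.1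
    (hφ φ.not (formula_mem_typeOf.2 (Formula.realize_not.2 hv)) N w hw) hw

theorem exists_isElementaryRel_insert
    (hp : ∀ (n : ℕ) (p : T.CompleteType (Fin n)), p.IsPrincipal)
    {M N : ModelType.{0, 0, 0} T} {F : Set (M × N)} (hF : F.Finite) (h : L.IsElementaryRel F)
    (m : M) : ∃ n : N, L.IsElementaryRel (insert (m, n) F) := by
  obtain ⟨k, c, rfl⟩ : ∃ (k : ℕ) (c : Fin k → M × N), F = Set.range c :=
    let ⟨k, c, _, hc⟩ := hF.fin_param
    ⟨k, c, hc.symm⟩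
  obtain ⟨φ, hφ, hiso⟩ :=
    (hp _ (T.typeOf (Fin.snoc (fun i => (c i).1) m : Fin (k + 1) → M))).exists_isolating
  have key := h k c Set.mem_range_self
    ((φ.relabel (Fin.snoc Sum.inl (Sum.inr ()) : Fin (k + 1) → Fin k ⊕ Unit)).iExs Unit)
  have comp_snoc {A : Type} (a : Fin k → A) (i : Unit → A) :
      Sum.elim a i ∘ (Fin.snoc Sum.inl (Sum.inr ()) : Fin (k + 1) → Fin k ⊕ Unit) =
        (Fin.snoc a (i ()) : Fin (k + 1) → A) := by
    funext j; cases j using Fin.lastCases <;> simp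
  simp only [Formula.realize_iExs, Formula.realize_relabel, comp_snoc] at key
  obtain ⟨i, hi⟩ := key.1 ⟨fun _ => m, hφ⟩
  refine ⟨i (), ?_⟩
  have same (ψ : L.Formula (Fin (k + 1))) :
      ψ.Realize (Fin.snoc (fun i => (c i).1) m : Fin (k + 1) → M) ↔
        ψ.Realize (Fin.snoc (fun i => (c i).2) (i ()) : Fin (k + 1) → N) := by
    refine ⟨fun hψ => hiso ψ hψ N _ hi, fun hψ => ?_⟩
    by_contra hv
    exact Formula.realize_not.1 (hiso ψ.not (Formula.realize_not.2 hv) N _ hi) hψ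
  convert isElementaryRel_range same
  ext q
  simp [Fin.exists_fin_succ', or_comm, eq_comm]

theorem categorical_of_forall_isPrincipal (hT : T.IsComplete)
    (hp : ∀ (n : ℕ) (p : T.CompleteType (Fin n)), p.IsPrincipal) :
    (ℵ₀ : Cardinal.{0}).Categorical T := by
  intro M N hM hN
  have := (mk_le_aleph0_iff (α := M)).1 hM.le
  have := (mk_le_aleph0_iff (α := N)).1 hN.le
  refine nonempty_equiv_of_backAndForth
    (ElementarilyEquivalent.isElementaryRel_empty (hT.models_elementarily_equivalent M N))
    (fun F hF h m => exists_isElementaryRel_insert hp hF h m) fun F hF h n => ?_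
  obtain ⟨m, hm⟩ := exists_isElementaryRel_insert hp
    (hF.preimage Prod.swap_injective.injOn) h.swap n
  refine ⟨m, ?_⟩
  convert hm.swap using 1
  ext ⟨x, y⟩
  simp [and_comm]

/-- A formula in countably many variables only uses finitely many of them. -/
theorem _root_.FirstOrder.Language.Formula.exists_fin_realize_iff {L : Language}
    (ψ : L.Formula ℕ) : ∃ N₀ : ℕ, ∀ N ≥ N₀, ∃ θ : L.Formula (Fin N),
      ∀ (M : Type) [L.Structure M] (v : ℕ → M), θ.Realize (fun i => v i) ↔ ψ.Realize v := by
  refine ⟨ψ.freeVarFinset.sup id + 1, fun N hN => ⟨ψ.restrictFreeVar fun a => ⟨a.1,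
    (Nat.lt_succ_of_le (Finset.le_sup (f := id) a.2)).trans_le hN⟩, fun M _ v => ?_⟩⟩
  exact BoundedFormula.realize_restrictFreeVar v fun a => rfl

variable (T) in
/-- The formulas in countably many variables that are consistent with `T`, ordered by
entailment: larger formulas are stronger. -/
structure ConsistentFormula where
  /-- The underlying formula -/
  toFormula : L.Formula ℕ
  consistent : ∃ (M : ModelType.{0, 0, 0} T) (v : ℕ → M), toFormula.Realize v

instance : Preorder (ConsistentFormula T) where
  le ψ χ := ∀ (M : ModelType.{0, 0, 0} T) (v : ℕ → M), χ.1.Realize v → ψ.1.Realize v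
  le_refl _ _ _ h := h
  le_trans _ _ _ h₁ h₂ M v h := h₁ M v (h₂ M v h)

/-- Compactness: an increasing sequence of consistent formulas is jointly realized. -/
theorem ConsistentFormula.exists_realize_of_monotone {S : ℕ → ConsistentFormula T}
    (hS : Monotone S) :
    ∃ (M : ModelType.{0, 0, 0} T) (v : ℕ → M), ∀ k, (S k).1.Realize v := by
  have hsat : ((L.lhomWithConstants ℕ).onTheory T ∪
      Set.range fun k => Formula.equivSentence (S k).1).IsSatisfiable := by
    rw [isSatisfiable_iff_isFinitelySatisfiable]
    intro T₀ hT₀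
    obtain ⟨K, hK⟩ : ∃ K, ∀ φ ∈ T₀, φ ∈ (L.lhomWithConstants ℕ).onTheory T ∨
        ∃ k ≤ K, Formula.equivSentence (S k).1 = φ := by
      have (φ : T₀) : ∃ k, φ.1 ∈ (L.lhomWithConstants ℕ).onTheory T ∨
          Formula.equivSentence (S k).1 = φ.1 := by
        rcases hT₀ φ.2 with h | ⟨k, hk⟩
        exacts [⟨0, Or.inl h⟩, ⟨k, Or.inr hk⟩]
      choose k hk using this
      obtain ⟨K, hK⟩ := Finite.exists_le k
      exact ⟨K, fun φ hφ => (hk ⟨φ, hφ⟩).imp id fun h => ⟨_, hK _, h⟩⟩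
    obtain ⟨M, v, hv⟩ := (S K).2
    let _ : (constantsOn ℕ).Structure M := constantsOn.structure v
    have : M ⊨ (T₀ : L[[ℕ]].Theory) := by
      refine ⟨fun φ hφ => ?_⟩
      rcases hK φ hφ with h | ⟨k, hkK, rfl⟩
      · exact ((LHom.onTheory_model (L.lhomWithConstants ℕ) T).2 M.is_model).realize_of_mem φ h
      · exact (Formula.realize_equivSentence M _).2 (hS hkK M v hv)
    exact Model.isSatisfiable M
  obtain ⟨M⟩ := hsat
  refine ⟨(M.subtheoryModel Set.subset_union_left).reduct (L.lhomWithConstants ℕ),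
    fun k => (L.con k : M), fun k => ?_⟩
  have hM : M ⊨ Formula.equivSentence (S k).1 :=
    M.is_model.realize_of_mem _ (Or.inr ⟨k, rfl⟩)
  exact (@Formula.realize_equivSentence _
    ((M.subtheoryModel Set.subset_union_left).reduct (L.lhomWithConstants ℕ)) _ _ M.struc
    (@LHom.isExpansionOn_reduct _ _ (L.lhomWithConstants ℕ) M M.struc) (S k).1).1 hM

theorem ConsistentFormula.exists_le_of_realize (ψ : ConsistentFormula T) (χ : L.Formula ℕ)
    {M : ModelType.{0, 0, 0} T} {v : ℕ → M} (hψ : ψ.1.Realize v) (hχ : χ.Realize v) :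
    ∃ ψ' : ConsistentFormula T, ψ ≤ ψ' ∧ ∀ (N : ModelType.{0, 0, 0} T) (w : ℕ → N),
      ψ'.1.Realize w → χ.Realize w :=
  ⟨⟨ψ.1 ⊓ χ, M, v, Formula.realize_inf.2 ⟨hψ, hχ⟩⟩,
    fun _ _ h => (Formula.realize_inf.1 h).1, fun _ _ h => (Formula.realize_inf.1 h).2⟩

/-- Henkin witnesses are generic. -/
theorem ConsistentFormula.exists_le_witness (ψ : ConsistentFormula T) {n : ℕ}
    (χ : L.Formula (Fin (n + 1))) (i : Fin n → ℕ) :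
    ∃ ψ' : ConsistentFormula T, ψ ≤ ψ' ∧ ∃ j : ℕ, ∀ (N : ModelType.{0, 0, 0} T) (w : ℕ → N),
      ψ'.1.Realize w → ∀ a : N, χ.Realize (Fin.snoc (w ∘ i) a : Fin (n + 1) → N) →
        χ.Realize (Fin.snoc (w ∘ i) (w j) : Fin (n + 1) → N) := by
  obtain ⟨M, v, hv⟩ := ψ.2
  by_cases hχ : ∃ a : M, χ.Realize (Fin.snoc (v ∘ i) a : Fin (n + 1) → M)
  · obtain ⟨a, ha⟩ := hχ
    obtain ⟨B, hB⟩ := ψ.1.exists_fin_realize_iff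
    obtain ⟨C, hC⟩ := Finite.exists_le i
    let j := max B (C + 1)
    have hi (k : Fin n) : i k ≠ j :=
      ((Nat.lt_succ_of_le (hC k)).trans_le (le_max_right B (C + 1))).ne
    obtain ⟨θ, hθ⟩ := hB j (le_max_left _ _)
    have comp_snoc {N : Type} (w : ℕ → N) :
        w ∘ (Fin.snoc i j : Fin (n + 1) → ℕ) = (Fin.snoc (w ∘ i) (w j) : Fin (n + 1) → N) := by
      funext k; cases k using Fin.lastCases <;> simp
    obtain ⟨ψ', hle, hψ'⟩ := ψ.exists_le_of_realize
      (χ.relabel (Fin.snoc i j : Fin (n + 1) → ℕ)) (M := M) (v := Function.update v j a)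
      (by
        rw [← hθ] at hv ⊢
        convert hv using 2 with k
        exact Function.update_of_ne k.2.ne _ _)
      (by
        rw [Formula.realize_relabel, comp_snoc]
        convert ha using 2
        · funext k
          exact Function.update_of_ne (hi k) _ _
        · exact Function.update_self _ _ _)
    refine ⟨ψ', hle, j, fun N w hw _ _ => ?_⟩
    have := hψ' N w hw
    rwa [Formula.realize_relabel, comp_snoc] at this
  · have realize_iff {N : Type} [L.Structure N] (w : ℕ → N) :
        ((χ.relabel (Fin.snoc (Sum.inl ∘ i) (Sum.inr ()) : Fin (n + 1) → ℕ ⊕ Unit)).iExs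
          Unit).Realize w ↔ ∃ a : N, χ.Realize (Fin.snoc (w ∘ i) a : Fin (n + 1) → N) := by
      have comp_snoc (u : Unit → N) : Sum.elim w u ∘
          (Fin.snoc (Sum.inl ∘ i) (Sum.inr ()) : Fin (n + 1) → ℕ ⊕ Unit) =
            (Fin.snoc (w ∘ i) (u ()) : Fin (n + 1) → N) := by
        funext k; cases k using Fin.lastCases <;> simp
      simp only [Formula.realize_iExs, Formula.realize_relabel, comp_snoc]
      exact ⟨fun ⟨u, hu⟩ => ⟨_, hu⟩, fun ⟨a, ha⟩ => ⟨fun _ => a, ha⟩⟩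
    obtain ⟨ψ', hle, hψ'⟩ := ψ.exists_le_of_realize _ hv
      (Formula.realize_not.2 (mt (realize_iff v).1 hχ))
    exact ⟨ψ', hle, 0, fun N w hw a ha =>
      (Formula.realize_not.1 (hψ' N w hw) ((realize_iff w).2 ⟨a, ha⟩)).elim⟩

/-- Tuples omitting a non-principal type are generic. -/
theorem ConsistentFormula.exists_le_omit (ψ : ConsistentFormula T) {n : ℕ}
    {p : T.CompleteType (Fin n)} (hp : ¬ p.IsPrincipal) (i : Fin n → ℕ) :
    ∃ ψ' : ConsistentFormula T, ψ ≤ ψ' ∧ ∃ χ : L.Formula (Fin n), Formula.equivSentence χ ∈ p ∧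
      ∀ (N : ModelType.{0, 0, 0} T) (w : ℕ → N), ψ'.1.Realize w → ¬ χ.Realize (w ∘ i) := by
  obtain ⟨B, hB⟩ := ψ.1.exists_fin_realize_iff
  obtain ⟨C, hC⟩ := Finite.exists_le i
  let j := max B (C + 1)
  have hi (k : Fin n) : i k < j :=
    (Nat.lt_succ_of_le (hC k)).trans_le (le_max_right B (C + 1))
  obtain ⟨θ, hθ⟩ := hB j (le_max_left _ _)
  let φ : L.Formula (Fin n) := Formula.iExs (Fin j) (θ.relabel Sum.inr ⊓
    Formula.iInf fun k : Fin n =>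
      (Term.var (Sum.inl k) : L.Term (Fin n ⊕ Fin j)).equal (Term.var (Sum.inr ⟨i k, hi k⟩)))
  have hφ {N : Type} [L.Structure N] (y : Fin n → N) :
      φ.Realize y ↔ ∃ u : Fin j → N, θ.Realize u ∧ ∀ k, y k = u ⟨i k, hi k⟩ := by
    simp [φ, Formula.realize_iExs, Function.comp_def]
  have : ∃ χ : L.Formula (Fin n), Formula.equivSentence χ ∈ p ∧
      ∃ (M : ModelType.{0, 0, 0} T) (y : Fin n → M), φ.Realize y ∧ ¬ χ.Realize y := by
    by_contra! h
    obtain ⟨M, v, hv⟩ := ψ.2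
    exact hp ⟨φ, ⟨M, v ∘ i, (hφ _).2 ⟨fun k => v k, (hθ M v).2 hv, fun k => rfl⟩⟩, h⟩
  obtain ⟨χ, hχ, M, y, hy, hny⟩ := this
  obtain ⟨u, hu, hyu⟩ := (hφ y).1 hy
  let v : ℕ → M := fun k => if h : k < j then u ⟨k, h⟩ else Classical.arbitrary M
  have hvu (k : Fin j) : v k = u k := dif_pos k.2
  obtain ⟨ψ', hle, hψ'⟩ := ψ.exists_le_of_realize (χ.relabel i).not (v := v)
    (by
      rw [← hθ]
      simpa only [hvu] using hu)
    (by
      rw [Formula.realize_not, Formula.realize_relabel]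
      convert hny using 2
      funext k
      exact (hvu ⟨i k, hi k⟩).trans (hyu k).symm)
  refine ⟨ψ', hle, χ, hχ, fun N w hw => ?_⟩
  simpa [Formula.realize_not] using hψ' N w hw

/-- A set containing witnesses for all satisfiable formulas over it is the carrier of an
elementary substructure. -/
theorem exists_elementarySubstructure_of_witnesses {M : Type*} [L.Structure M] (A : Set M)
    (h : ∀ (n : ℕ) (χ : L.Formula (Fin (n + 1))) (x : Fin n → M), (∀ i, x i ∈ A) → ∀ a : M,
      χ.Realize (Fin.snoc x a : Fin (n + 1) → M) →
        ∃ b ∈ A, χ.Realize (Fin.snoc x b : Fin (n + 1) → M)) :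
    ∃ S : L.ElementarySubstructure M, (S : Set M) = A := by
  let S : L.Substructure M := ⟨A, fun {n} f x hx => by
    obtain ⟨b, hb, hfb⟩ := h n ((Term.func f fun k => Term.var k.castSucc).equal
      (Term.var (Fin.last n))) x hx (Structure.funMap f x) (by simp)
    simp only [Formula.realize_equal, Term.realize_func, Term.realize_var, Fin.snoc_castSucc,
      Fin.snoc_last] at hfb
    rwa [hfb]⟩
  refine ⟨S.toElementarySubstructure fun n φ x a ha => ?_, rfl⟩
  obtain ⟨b, hb, hφb⟩ := h n (φ.toFormula.relabel (Sum.elim Empty.elim id)) (fun k => x k)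
    (fun k => (x k).2) a (by
      simp only [Formula.realize_relabel, BoundedFormula.realize_toFormula]
      convert ha using 1
      rfl)
  refine ⟨⟨b, hb⟩, ?_⟩
  simp only [Formula.realize_relabel, BoundedFormula.realize_toFormula] at hφb
  convert hφb using 1
  rfl

/-- The **omitting types theorem**: over a countable language, a non-principal type is omitted in
some countable model. -/
theorem exists_countable_model_omitting [Countable L.Symbols] (hT : T.IsSatisfiable) {n : ℕ}
    {p : T.CompleteType (Fin n)} (hp : ¬ p.IsPrincipal) :
    ∃ M : ModelType.{0, 0, 0} T, Countable M ∧ p ∉ T.realizedTypes M (Fin n) := by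
  obtain ⟨M₀⟩ := hT
  let D : ((Σ k, L.Formula (Fin (k + 1)) × (Fin k → ℕ)) ⊕ (Fin n → ℕ)) →
      Order.Cofinal (ConsistentFormula T) := Sum.elim
    (fun q => ⟨{ψ' | ∃ j : ℕ, ∀ (N : ModelType.{0, 0, 0} T) (w : ℕ → N), ψ'.1.Realize w →
      ∀ a : N, q.2.1.Realize (Fin.snoc (w ∘ q.2.2) a : Fin (q.1 + 1) → N) →
        q.2.1.Realize (Fin.snoc (w ∘ q.2.2) (w j) : Fin (q.1 + 1) → N)}, fun ψ =>
      let ⟨ψ', hle, h⟩ := ψ.exists_le_witness q.2.1 q.2.2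
      ⟨ψ', h, hle⟩⟩)
    (fun i => ⟨{ψ' | ∃ χ : L.Formula (Fin n), Formula.equivSentence χ ∈ p ∧
      ∀ (N : ModelType.{0, 0, 0} T) (w : ℕ → N), ψ'.1.Realize w → ¬ χ.Realize (w ∘ i)}, fun ψ =>
      let ⟨ψ', hle, h⟩ := ψ.exists_le_omit hp i
      ⟨ψ', h, hle⟩⟩)
  let _ := Encodable.ofCountable ((Σ k, L.Formula (Fin (k + 1)) × (Fin k → ℕ)) ⊕ (Fin n → ℕ))
  let ψ₀ : ConsistentFormula T :=
    ⟨⊤, M₀, fun _ => Classical.arbitrary M₀, Formula.realize_top.2 trivial⟩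
  obtain ⟨M, v, hv⟩ := ConsistentFormula.exists_realize_of_monotone
    (Order.sequenceOfCofinals.monotone ψ₀ D)
  obtain ⟨S, hS⟩ := exists_elementarySubstructure_of_witnesses (L := L) (Set.range v)
    fun k χ x hx a ha => by
      choose i hi using hx
      obtain rfl : v ∘ i = x := funext hi
      obtain ⟨j, hj⟩ := Order.sequenceOfCofinals.encode_mem ψ₀ D (Sum.inl ⟨k, χ, i⟩)
      exact ⟨v j, ⟨j, rfl⟩, hj M v (hv _) a ha⟩
  refine ⟨ModelType.of T S, ?_, ?_⟩
  · have : (S : Set M).Countable := hS ▸ Set.countable_range v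
    exact this.to_subtype
  · rintro ⟨x, rfl⟩
    have hx (k : Fin n) : ∃ j, v j = (show S from x k).1 := by
      have : (show S from x k).1 ∈ (S : Set M) := (show S from x k).2
      rwa [hS] at this
    choose i hi using hx
    obtain ⟨χ, hχ, hχ'⟩ := Order.sequenceOfCofinals.encode_mem ψ₀ D (Sum.inr i)
    refine hχ' M v (hv _) ?_
    rw [CompleteType.formula_mem_typeOf] at hχ
    have : v ∘ i = S.subtype ∘ x := funext hi
    rw [this]
    exact (S.subtype.map_formula χ x).2 hχ

theorem typeOf_elementaryEmbedding_comp {M N : Type*} [L.Structure M] [L.Structure N] [M ⊨ T]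
    [N ⊨ T] [Nonempty M] [Nonempty N] {α : Type*} (f : M ↪ₑ[L] N) (v : α → M) :
    T.typeOf (f ∘ v) = T.typeOf v := by
  refine SetLike.ext fun φ => ?_
  rw [CompleteType.mem_typeOf, CompleteType.mem_typeOf]
  exact f.map_formula _ v

/-- Every type over a theory in a countable language with only infinite models is realized in a
model of size `ℵ₀`. -/
theorem exists_model_card_aleph0_realizing [Countable L.Symbols]
    (hInf : ∀ M : ModelType.{0, 0, 0} T, Infinite M) {n : ℕ} (p : T.CompleteType (Fin n)) :
    ∃ M : ModelType.{0, 0, 0} T, #M = ℵ₀ ∧ p ∈ T.realizedTypes M (Fin n) := by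
  obtain ⟨M, v, rfl⟩ := exists_modelType_is_realized_in T p
  have := hInf M
  obtain ⟨S, hvS, hS⟩ := exists_elementarySubstructure_card_eq L (Set.range v)
    (ℵ₀ : Cardinal.{0}) le_rfl (by simp) (by simpa only [lift_uzero, Language.card] using mk_le_aleph0 (α := L.Symbols))
    (by simp)
  let w : Fin n → S := fun k => ⟨v k, hvS ⟨k, rfl⟩⟩
  exact ⟨ModelType.of T S, by simpa using hS, w, (typeOf_elementaryEmbedding_comp S.subtype w).symm⟩

theorem isPrincipal_of_categorical [Countable L.Symbols]
    (hInf : ∀ M : ModelType.{0, 0, 0} T, Infinite M)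
    (h : (ℵ₀ : Cardinal.{0}).Categorical T) {n : ℕ} (p : T.CompleteType (Fin n)) :
    p.IsPrincipal := by
  by_contra hp
  obtain ⟨M, hM, hpM⟩ := exists_model_card_aleph0_realizing hInf p
  obtain ⟨N, hN, hpN⟩ := exists_countable_model_omitting (Model.isSatisfiable M) hp
  have := hInf N
  obtain ⟨e⟩ := h M N hM (mk_eq_aleph0 N)
  obtain ⟨v, rfl⟩ := hpM
  exact hpN ⟨e ∘ v, typeOf_elementaryEmbedding_comp e.toElementaryEmbedding v⟩

end Theory

end FirstOrder.Language

/-- A complete theory `T` in a countable language, all of whose models are infinite, is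
`ℵ₀`-categorical iff every complete `n`-type of `T` is principal. -/
theorem aleph0_categorical_iff_all_types_principal {L : Language} [Countable L.Symbols]
    (T : L.Theory) (hT : T.IsMaximal)
    (hInf : ∀ M : Theory.ModelType.{0, 0, 0} T, Infinite M) :
    (Cardinal.aleph0.{0}).Categorical T ↔
      ∀ (n : ℕ) (p : T.CompleteType (Fin n)), p.IsPrincipal :=
  ⟨fun h _ p => Theory.isPrincipal_of_categorical hInf h p,
    Theory.categorical_of_forall_isPrincipal hT.isComplete⟩
end
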